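/- arXiv:1011.4341 — 4 statements merged into one kernel-verified Lean document; each statement's English description precedes it below -/
import Mathlib

section
/- Let T be a normal subgroup of a finite group G such that G/T is solvable. Then there exists a solvable subgroup M of G with G = MT; consequently there exists a maximal solvable subgroup S of G with G = ST. -/
/-!
Among the subgroups `M` with `MT = G`, take a minimal one. No maximal subgroup `K` of `M` can
supplement `M ∩ T` in `M`, since then `KT = G`; hence every maximal subgroup of `M` contains
`M ∩ T`, i.e. `M ∩ T ≤ Φ(M)`. The Frattini subgroup of a finite group is nilpotent
(`frattini_nilpotent`), so `M` is an extension of a subgroup of the solvable group `G ⧸ T` by a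
nilpotent group, and is therefore solvable. Any maximal solvable subgroup containing `M` is
again a supplement of `T`.
-/

namespace Paper

/-- The conjugate subgroup `H^x = x⁻¹ H x`. -/
def conjugate {G : Type*} [Group G] (H : Subgroup G) (x : G) : Subgroup G :=
  H.map (MulAut.conj x⁻¹).toMonoidHom

/-- `Base_H(G) ≤ k`: there exist `x_1, …, x_k ∈ G` with `H^{x_1} ∩ … ∩ H^{x_k} = H_G`,
where `H_G` is the core of `H` in `G`. -/
def BaseLE {G : Type*} [Group G] (H : Subgroup G) (k : ℕ) : Prop :=
  ∃ x : Fin k → G, (⨅ i, conjugate H (x i)) = H.normalCore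

/-- `Base_H(G)`: the base size of `G` with respect to `H`, the least `k` such that some
`k` conjugates of `H` intersect in the core `H_G`. -/
noncomputable def baseSizeRel {G : Type*} [Group G] (H : Subgroup G) : ℕ :=
  sInf {k | BaseLE H k}

/-- `Reg_H(G, m) ≥ s`: letting `Ω = G/H` (so that `G/H_G` acts faithfully and transitively
on `Ω`), there are at least `s` regular `(G/H_G)`-orbits on `Ω^m`, i.e. there are `s` points
of `Ω^m` lying in pairwise distinct orbits whose stabilizer in `G` is exactly the core `H_G`
(the kernel of the action of `G` on `Ω`). -/
def RegGE {G : Type*} [Group G] (H : Subgroup G) (m s : ℕ) : Prop :=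
  ∃ ω : Fin s → (Fin m → G ⧸ H),
    (∀ i, MulAction.stabilizer G (ω i) = H.normalCore) ∧
    ∀ i j, i ≠ j → ω i ∉ MulAction.orbit G (ω j)

/-- A maximal solvable subgroup: a solvable subgroup maximal under inclusion among
solvable subgroups. -/
def IsMaxSolvable {G : Type*} [Group G] (S : Subgroup G) : Prop :=
  IsSolvable S ∧ ∀ T : Subgroup G, IsSolvable T → S ≤ T → S = T

/-- A minimal supplement `M` of a normal subgroup `T` satisfies `M ∩ T ≤ Φ(M)`; here `M ∩ T` is
viewed inside `M` as `T.subgroupOf M`. -/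
theorem subgroupOf_le_frattini_of_minimal {G : Type*} [Group G] {T M : Subgroup G} [T.Normal]
    (hM : Minimal (fun H : Subgroup G => H ⊔ T = ⊤) M) : T.subgroupOf M ≤ frattini M := by
  refine le_iInf₂ fun K hK => ?_
  by_contra hle
  have hsup : K ⊔ T.subgroupOf M = ⊤ := hK.2 _ (left_lt_sup.2 hle)
  have hmap : K.map M.subtype ⊔ (T.subgroupOf M).map M.subtype = M := by
    rw [← Subgroup.map_sup, hsup, ← MonoidHom.range_eq_map, Subgroup.range_subtype]
  have hT : (T.subgroupOf M).map M.subtype ≤ T := Subgroup.map_comap_le _ _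
  have hKT : K.map M.subtype ⊔ T = ⊤ := by
    rw [eq_top_iff, ← hM.prop]
    refine sup_le ?_ le_sup_right
    exact hmap.symm.le.trans (sup_le_sup_left hT _)
  have hMK : M ≤ K.map M.subtype := hM.le_of_le hKT (Subgroup.map_subtype_le K)
  refine hK.1 (eq_top_iff.2 fun x _ => ?_)
  obtain ⟨y, hy, hyx⟩ := hMK x.2
  rwa [← Subtype.ext hyx]

theorem isSolvable_of_minimal_supplement {G : Type*} [Group G] [Finite G] {T M : Subgroup G}
    [T.Normal] [Group.IsSolvable (G ⧸ T)]
    (hM : Minimal (fun H : Subgroup G => H ⊔ T = ⊤) M) : Group.IsSolvable M := by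
  have := frattini_nilpotent (G := M)
  refine Group.isSolvable_of_ker_le_range (frattini M).subtype
    ((QuotientGroup.mk' T).comp M.subtype) ?_
  rw [Subgroup.range_subtype, ← MonoidHom.comap_ker, QuotientGroup.ker_mk']
  exact subgroupOf_le_frattini_of_minimal hM

/-- If `T ⊴ G` with `G/T` solvable, then there is a solvable subgroup `M` with `G = MT`,
and consequently a maximal solvable subgroup `S` with `G = ST`. -/
theorem exists_solvable_complement {G : Type*} [Group G] [Finite G]
    (T : Subgroup G) [T.Normal] (hsolv : IsSolvable (G ⧸ T)) :
    (∃ M : Subgroup G, IsSolvable M ∧ ∀ g : G, ∃ m ∈ M, ∃ t ∈ T, g = m * t) ∧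
    (∃ S : Subgroup G, IsMaxSolvable S ∧ ∀ g : G, ∃ s ∈ S, ∃ t ∈ T, g = s * t) := by
  have : Group.IsSolvable (G ⧸ T) := hsolv
  obtain ⟨M, hM⟩ := (Set.toFinite {H : Subgroup G | H ⊔ T = ⊤}).exists_minimal
    ⟨⊤, top_sup_eq T⟩
  have hMs : IsSolvable M := isSolvable_of_minimal_supplement hM
  have hMT : ∀ g : G, ∃ m ∈ M, ∃ t ∈ T, g = m * t := fun g => by
    have hg : g ∈ M ⊔ T := by
      rw [show M ⊔ T = ⊤ from hM.prop]
      exact Subgroup.mem_top g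
    obtain ⟨m, hm, t, ht, h⟩ := Subgroup.mem_sup_of_normal_right.1 hg
    exact ⟨m, hm, t, ht, h.symm⟩
  refine ⟨⟨M, hMs, hMT⟩, ?_⟩
  obtain ⟨S, hMS, hS⟩ := (Set.toFinite {H : Subgroup G | IsSolvable H}).exists_le_maximal hMs
  refine ⟨S, ⟨hS.prop, fun H hH hSH => hS.eq_of_le hH hSH⟩, fun g => ?_⟩
  obtain ⟨m, hm, t, ht, h⟩ := hMT g
  exact ⟨m, hMS hm, t, ht, h⟩

end Paper
end

section
/- Let T be a normal subgroup of a finite group G, and let M be a subgroup of G that is minimal (under inclusion) among subgroups satisfying MT = G. Then M ∩ T is contained in the Frattini subgroup Φ(M) of M. In particular, if additionally G/T is solvable, then M is solvable. -/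
/-!
If a maximal subgroup `K` of `M` missed part of `M ∩ T`, then `K (M ∩ T) = M` because `M ∩ T` is
normal in `M`; absorbing `M ∩ T` into `T` gives `K T = M T = G`, contradicting the minimality of
`M`. For solvability, the kernel `M ∩ T` of `M → G ⧸ T` lies in `Φ(M)`, which is nilpotent by
`frattini_nilpotent`, so `M` is an extension of a solvable group by a solvable group.
-/

namespace Paper

/-- If `T ⊴ G` and `M` is minimal among subgroups with `MT = G`, then `M ∩ T ≤ Φ(M)`;
in particular, if moreover `G/T` is solvable, then `M` is solvable. -/
theorem inf_le_frattini_of_minimal {G : Type*} [Group G] [Finite G]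
    (T : Subgroup G) [T.Normal] (M : Subgroup G)
    (hMT : ∀ g : G, ∃ m ∈ M, ∃ t ∈ T, g = m * t)
    (hmin : ∀ M' : Subgroup G, M' ≤ M → (∀ g : G, ∃ m ∈ M', ∃ t ∈ T, g = m * t) → M' = M) :
    T.subgroupOf M ≤ frattini M ∧ (IsSolvable (G ⧸ T) → IsSolvable M) := by
  have hle : T.subgroupOf M ≤ frattini M := by
    refine le_iInf₂ fun K hK => ?_
    by_contra hTK
    have hsup : K ⊔ T.subgroupOf M = ⊤ := hK.2 _ (left_lt_sup.2 hTK)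
    have hKM : K.map M.subtype = M := by
      refine hmin _ (Subgroup.map_subtype_le K) fun g => ?_
      obtain ⟨m, hm, t, ht, rfl⟩ := hMT g
      have hmem : (⟨m, hm⟩ : M) ∈ K ⊔ T.subgroupOf M := hsup ▸ Subgroup.mem_top _
      obtain ⟨k, hk, n, hn, hkn⟩ := Subgroup.mem_sup_of_normal_right.1 hmem
      have hkn' : (k : G) * n = m := congrArg Subtype.val hkn
      refine ⟨k, Subgroup.mem_map_of_mem M.subtype hk, n * t,
        T.mul_mem (Subgroup.mem_subgroupOf.1 hn) ht, ?_⟩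
      rw [← hkn', mul_assoc]
    refine hK.1 (Subgroup.map_injective M.subtype_injective ?_)
    rw [hKM, ← MonoidHom.range_eq_map, Subgroup.range_subtype]
  refine ⟨hle, fun hsol => ?_⟩
  have hquot : Group.IsSolvable (G ⧸ T) := hsol
  have hnil : Group.IsNilpotent (frattini M) := frattini_nilpotent
  refine Group.isSolvable_of_ker_le_range (frattini M).subtype
    ((QuotientGroup.mk' T).comp M.subtype) ?_
  rw [Subgroup.range_subtype, ← MonoidHom.comap_ker, QuotientGroup.ker_mk']
  exact hle

end Paper
end

section
/- Let G be a solvable subgroup of the symmetric group Sym_n. Then there exists an asymmetric partition P_1 ⊔ P_2 ⊔ … ⊔ P_m = {1,…,n} for G with m ≤ 5. -/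
/-!
The induction proves more than one asymmetric colouring: a solvable group acting on a nonempty finite
set has five pairwise inequivalent asymmetric colourings by five colours (`Good`).

If the action preserves an equivalence relation that is neither equality nor the full relation, then
the quotient set and every class satisfy the induction hypothesis. A 5-colouring of the set of classes
is then lifted by using, on a class of colour `k`, the `k`-th of its five asymmetric colourings
(`good_of_fibers`). An element preserving the lift must match the types of the classes, so it fixes
every class, and then it acts trivially on each of them. Orbits and blocks of imprimitivity are both
covered by this step.

Otherwise the group is trivial or primitive. In the primitive case a nontrivial elementary abelian
normal subgroup (`exists_normal_elementary`) is regular, so the set becomes a vector space `V` over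
`𝔽_p` and the group acts by affine maps. Fix a basis `b₀, …, b_{d-1}` and give `0` colour 0, `b₀`
colour 1, the other `b_i` colour 2, the sums `b_i + b_{i+1}` colour 3, and everything else colour 4.
An affine map preserving these classes fixes `0`, hence is linear, permutes the basis, and induces an
automorphism of the path `b₀ - b₁ - ⋯ - b_{d-1}` fixing its end `b₀`; so it is the identity
(`eq_id_of_frameColor`). Five inequivalent colourings arise by adding constants modulo 5: two shifts
could be equivalent only if all five classes were singletons, that is if `V = 𝔽_5`, but then colour 3
is not used.
-/

namespace Paper

/-- There are five 5-colourings `c 0, …, c 4` of `Ω` lying in distinct `G`-orbits, each with only the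
kernel of the action as stabilizer. The action need not be faithful; `Ω` is necessarily nonempty. -/
def Good (G Ω : Type) [Group G] [MulAction G Ω] : Prop :=
  ∃ c : Fin 5 → Ω → Fin 5, ∀ (i j : Fin 5) (g : G),
    (∀ x, c i (g • x) = c j x) → i = j ∧ ∀ x : Ω, g • x = x

/-- `Good` depends only on the permutation group induced on `Ω`. -/
lemma good_of_range {G Ω : Type} [Group G] [MulAction G Ω]
    (h : Good (MulAction.toPermHom G Ω).range Ω) : Good G Ω := by
  obtain ⟨c, hc⟩ := h
  exact ⟨c, fun i j g hg => hc i j ⟨MulAction.toPermHom G Ω g, g, rfl⟩ hg⟩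

/-- The imprimitive step, for an equivariant map `π : Ω → Q`. The hypothesis `hB` is `Good` for the
action of the stabilizer of `q` on the fiber over `q`, with colourings extended arbitrarily to `Ω`. -/
lemma good_of_fibers {G Ω Q : Type} [Group G] [MulAction G Ω] [MulAction G Q]
    (π : Ω → Q) (hπ : ∀ (g : G) x, π (g • x) = g • π x) (hQ : Good G Q)
    (hB : ∀ q : Q, ∃ c : Fin 5 → Ω → Fin 5, ∀ (i j : Fin 5) (g : G), g • q = q →
      (∀ x, π x = q → c i (g • x) = c j x) → i = j ∧ ∀ x, π x = q → g • x = x) :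
    Good G Ω := by
  obtain ⟨d, hd⟩ := hQ
  choose c hc using hB
  -- The colourings of the fibers have to be chosen compatibly along each `G`-orbit in `Q`: they are
  -- carried over by `t q` from the fiber over an orbit representative `rep q`.
  obtain ⟨rep, hrep, hinv⟩ : ∃ rep : Q → Q, (∀ q, ∃ g : G, g • rep q = q) ∧
      ∀ (g : G) q, rep (g • q) = rep q := by
    refine ⟨fun q => (Quotient.mk (MulAction.orbitRel G Q) q).out, fun q => ?_, fun g q => ?_⟩
    · exact (MulAction.orbitRel G Q).symm (Quotient.mk_out (s := MulAction.orbitRel G Q) q)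
    · have : Quotient.mk (MulAction.orbitRel G Q) (g • q)
          = Quotient.mk (MulAction.orbitRel G Q) q := Quotient.sound ⟨g, rfl⟩
      simp only [this]
  choose t ht using hrep
  have ht' : ∀ q, (t q)⁻¹ • q = rep q := fun q => by rw [inv_smul_eq_iff, ht]
  refine ⟨fun i x => c (rep (π x)) (d i (π x)) ((t (π x))⁻¹ • x), fun i j g hg => ?_⟩
  have key : ∀ q, d i (g • q) = d j q ∧
      ∀ x, π x = rep q → ((t (g • q))⁻¹ * g * t q) • x = x := by
    intro q
    refine hc (rep q) _ _ _ ?_ fun x hx => ?_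
    · rw [mul_smul, mul_smul, ht, ht', hinv]
    · have h1 : π (t q • x) = q := by rw [hπ, hx, ht]
      have h2 := hg (t q • x)
      simp only [hπ g, h1, hinv, inv_smul_smul] at h2
      rw [← h2, mul_smul, mul_smul]
  obtain ⟨hij, hgQ⟩ := hd i j g fun q => (key q).1
  refine ⟨hij, fun x => ?_⟩
  have h := (key (π x)).2 ((t (π x))⁻¹ • x) (by rw [hπ, ht'])
  rwa [hgQ, mul_smul, mul_smul, smul_inv_smul, smul_left_cancel_iff] at h

open Classical in
/-- The colouring of a vector space with basis `b` that marks `0` by 0, the first basis vector by 1,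
the other basis vectors by 2, sums of two consecutive basis vectors by 3, and the rest by 4. -/
noncomputable def frameColor {K V : Type} [Field K] [AddCommGroup V] [Module K V] {d : ℕ}
    (b : Module.Basis (Fin d) K V) (v : V) : Fin 5 :=
  if v = 0 then 0
  else if ∃ i : Fin d, i.val = 0 ∧ v = b i then 1
  else if ∃ i, v = b i then 2
  else if ∃ i j : Fin d, j.val = i.val + 1 ∧ v = b i + b j then 3
  else 4

section
variable {K V : Type} [Field K] [AddCommGroup V] [Module K V] {d : ℕ}
    (b : Module.Basis (Fin d) K V)

lemma frameColor_eq_zero {v : V} : frameColor b v = 0 ↔ v = 0 := by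
  unfold frameColor
  split_ifs <;> simp_all

lemma frameColor_basis_zero {i : Fin d} (hi : i.val = 0) : frameColor b (b i) = 1 := by
  unfold frameColor
  rw [if_neg (b.ne_zero i), if_pos ⟨i, hi, rfl⟩]

lemma frameColor_basis_pos {i : Fin d} (hi : i.val ≠ 0) : frameColor b (b i) = 2 := by
  unfold frameColor
  rw [if_neg (b.ne_zero i), if_neg, if_pos ⟨i, rfl⟩]
  rintro ⟨j, hj, hij⟩
  exact hi (b.injective hij ▸ hj)

lemma eq_basis_zero_of_frameColor {v : V} (h : frameColor b v = 1) :
    ∃ i : Fin d, i.val = 0 ∧ v = b i := by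
  unfold frameColor at h
  split_ifs at h <;> simp_all

lemma eq_basis_of_frameColor {v : V} (h : frameColor b v = 2) : ∃ i : Fin d, v = b i := by
  unfold frameColor at h
  split_ifs at h <;> simp_all

lemma eq_add_of_frameColor {v : V} (h : frameColor b v = 3) :
    ∃ i j : Fin d, j.val = i.val + 1 ∧ v = b i + b j := by
  unfold frameColor at h
  split_ifs at h <;> simp_all

lemma frameColor_add {i j : Fin d} (hij : j.val = i.val + 1) :
    frameColor b (b i + b j) = 3 := by
  have hne : i ≠ j := by rintro rfl; omega
  have h0 : b i + b j ≠ 0 := by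
    intro h
    have := congrArg (fun v => b.repr v i) h
    simp [hne.symm] at this
  have h1 : ∀ k, b i + b j ≠ b k := by
    intro k h
    have h1 := congrArg (fun v => b.repr v i) h
    have h2 := congrArg (fun v => b.repr v j) h
    simp [Finsupp.single_apply, hne, hne.symm] at h1 h2
    exact hne (h1.symm.trans h2)
  unfold frameColor
  rw [if_neg h0, if_neg, if_neg, if_pos ⟨i, j, hij, rfl⟩]
  · rintro ⟨k, hk⟩; exact h1 k hk
  · rintro ⟨k, _, hk⟩; exact h1 k hk

lemma pair_eq {i k a c : Fin d} (hik : i ≠ k) (hac : a ≠ c) (h : b i + b k = b a + b c) :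
    (i = a ∧ k = c) ∨ (i = c ∧ k = a) := by
  have h1 := congrArg (fun v => b.repr v a) h
  have h2 := congrArg (fun v => b.repr v c) h
  simp only [map_add, Module.Basis.repr_self, Finsupp.add_apply, Finsupp.single_apply,
    if_neg hac, if_neg hac.symm] at h1 h2
  by_cases h3 : i = a <;> by_cases h4 : k = a <;> by_cases h5 : i = c <;> by_cases h6 : k = c <;>
    simp_all

/-- An injective linear map preserving `frameColor b` is the identity: it fixes `b 0` and maps
neighbours in the path `b 0, b 1, …` to neighbours. -/
lemma eq_id_of_frameColor (f : V →ₗ[K] V) (hf : Function.Injective f)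
    (h : ∀ v, frameColor b (f v) = frameColor b v) : f = LinearMap.id := by
  suffices H : ∀ n, ∀ i : Fin d, i.val = n → f (b i) = b i from b.ext fun i => H _ i rfl
  intro n
  induction n using Nat.strong_induction_on with
  | _ n ih =>
    rintro i rfl
    by_cases hi : i.val = 0
    · obtain ⟨j, hj, hij⟩ := eq_basis_zero_of_frameColor b ((h _).trans (frameColor_basis_zero b hi))
      rw [hij, Fin.ext (hj.trans hi.symm)]
    · obtain ⟨k, hk⟩ := eq_basis_of_frameColor b ((h _).trans (frameColor_basis_pos b hi))
      let l : Fin d := ⟨i.val - 1, by omega⟩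
      have hl : i.val = l.val + 1 := by simp only [l]; omega
      have hfl : f (b l) = b l := ih l.val (by omega) l rfl
      -- By injectivity `f (b i)` is not one of the vectors `b k` with `k < i`, already fixed by `f`.
      have hkn : ¬ k.val < i.val := by
        intro hlt
        have := b.injective (hf (hk.trans (ih k.val hlt k rfl).symm))
        rw [this] at hlt
        exact lt_irrefl _ hlt
      obtain ⟨a, c, hac, he⟩ := eq_add_of_frameColor b ((h _).trans (frameColor_add b hl))
      rw [map_add, hfl, hk] at he
      rcases pair_eq b (by rintro rfl; omega) (by rintro rfl; omega) he with ⟨h1, h2⟩ | ⟨h1, h2⟩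
      · rw [hk]
        congr 1
        apply Fin.ext
        rw [h2, hac, ← h1, hl]
      · subst h1 h2
        omega

end

/-- The primitive step: `M` is a transitive, hence regular, normal subgroup that is elementary abelian,
so that `m ↦ m • o` identifies the `𝔽_p`-space `M` with `Ω`, and the stabilizer of `o` acts on `M`
by conjugation. -/
lemma good_of_affine {G Ω : Type} [Group G] [Finite Ω] [MulAction G Ω] [FaithfulSMul G Ω]
    (M : Subgroup G) [M.Normal] (hcomm : ∀ x ∈ M, ∀ y ∈ M, x * y = y * x)
    (p : ℕ) [hp : Fact p.Prime] (hexp : ∀ x ∈ M, x ^ p = 1)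
    (o : Ω) (htrans : ∀ x : Ω, ∃ m ∈ M, m • o = x) : Good G Ω := by
  have hreg : ∀ m ∈ M, m • o = o → m = 1 := by
    intro m hm hmo
    refine FaithfulSMul.eq_of_smul_eq_smul (α := Ω) fun x => ?_
    obtain ⟨y, hy, rfl⟩ := htrans x
    rw [← mul_smul, hcomm m hm y hy, mul_smul, hmo, one_smul]
  let _ : CommGroup M :=
    { (inferInstance : Group M) with mul_comm := fun x y => Subtype.ext (hcomm x x.2 y y.2) }
  let V := Additive M
  let _ : Module (ZMod p) V := AddCommGroup.zmodModule (n := p) fun x =>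
    congrArg Additive.ofMul (Subtype.ext (hexp x.toMul x.toMul.2) : x.toMul ^ p = 1)
  let ev : V → Ω := fun v => v.toMul.1 • o
  have ev_inj : Function.Injective ev := by
    intro v w hvw
    have hvw : v.toMul.1 • o = w.toMul.1 • o := hvw
    have : (w.toMul⁻¹ * v.toMul).1 • o = o := by
      rw [Subgroup.coe_mul, mul_smul, hvw, ← mul_smul]; simp
    have := hreg _ (w.toMul⁻¹ * v.toMul).2 this
    have : w.toMul⁻¹ * v.toMul = 1 := Subtype.ext this
    exact (inv_mul_eq_one.mp this).symm
  let φ : V ≃ Ω := Equiv.ofBijective ev ⟨ev_inj, fun x => by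
    obtain ⟨m, hm, h⟩ := htrans x
    exact ⟨Additive.ofMul ⟨m, hm⟩, h⟩⟩
  have : Finite V := Finite.of_equiv Ω φ.symm
  have : Module.Finite (ZMod p) V := Module.Finite.of_finite
  let b : Module.Basis (Fin (Module.finrank (ZMod p) V)) (ZMod p) V := Module.finBasis (ZMod p) V
  have hφ0 : φ 0 = o := one_smul G o
  let col : Ω → Fin 5 := fun x => frameColor b (φ.symm x)
  have col_zero : ∀ x, col x = 0 ↔ x = o := fun x => by
    simp only [col]
    rw [frameColor_eq_zero, Equiv.symm_apply_eq, hφ0]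
  have main : ∀ g : G, (∀ x, col (g • x) = col x) → ∀ x : Ω, g • x = x := by
    intro g hg
    have hgo : g • o = o := (col_zero _).1 ((hg o).trans ((col_zero o).2 rfl))
    let f : V →+ V := MonoidHom.toAdditive (MulAut.conjNormal g : M ≃* M).toMonoidHom
    have hfφ : ∀ v, φ (f v) = g • φ v := by
      intro v
      change (MulAut.conjNormal g v.toMul : M).1 • o = g • v.toMul.1 • o
      rw [MulAut.conjNormal_apply, mul_smul, mul_smul, inv_smul_eq_iff.2 hgo.symm]
    have hid := eq_id_of_frameColor b (AddMonoidHom.toZModLinearMap p f)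
      (fun v w h => (MulAut.conjNormal g : M ≃* M).injective h) (fun v => by
        have := hg (φ v)
        simp only [col, ← hfφ, Equiv.symm_apply_apply] at this
        exact this)
    intro x
    obtain ⟨v, rfl⟩ := φ.surjective x
    rw [← hfφ]
    exact congrArg φ (LinearMap.congr_fun hid v)
  refine ⟨fun i x => col x + i, fun i j g hg => ?_⟩
  have hij : i = j := by
    by_contra hne
    -- Here `g` shifts the colours by `j - i`, a generator of `ℤ/5`, so it permutes the five colour
    -- classes cyclically; since the class of colour 0 is `{o}`, they are all singletons.
    have hstep : ∀ (n : ℕ) x, col (g ^ n • x) = col x + n • (j - i) := by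
      intro n
      induction n with
      | zero => simp
      | succ n ih =>
        intro x
        have this : col (g • g ^ n • x) + i = col (g ^ n • x) + j := hg (g ^ n • x)
        rw [pow_succ', mul_smul, eq_sub_of_add_eq this, ih, succ_nsmul]
        abel
    have hgen : ∀ s : Fin 5, s ≠ 0 → ∀ a : Fin 5, ∃ n : Fin 5, n.val • s = a := by decide
    have hs : j - i ≠ 0 := fun h => hne (sub_eq_zero.1 h).symm
    have hsurj : Function.Surjective col := fun a => by
      obtain ⟨n, hn⟩ := hgen _ hs a
      exact ⟨g ^ n.val • o, by rw [hstep, hn, (col_zero o).2 rfl, zero_add]⟩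
    have hinj : Function.Injective col := fun x y hxy => by
      obtain ⟨n, hn⟩ := hgen _ hs (-col x)
      have hx : g ^ n.val • x = o := (col_zero _).1 (by rw [hstep, hn, add_neg_cancel])
      have hy : g ^ n.val • y = o := (col_zero _).1 (by rw [hstep, hn, hxy, add_neg_cancel])
      exact smul_left_cancel _ (hx.trans hy.symm)
    obtain ⟨x, hx⟩ := hsurj 3
    obtain ⟨k, l, hkl, -⟩ := eq_add_of_frameColor b hx
    have hcard : p ^ Module.finrank (ZMod p) V = 5 := by
      have h1 := Module.natCard_eq_pow_finrank (K := ZMod p) (V := V)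
      rw [Nat.card_zmod] at h1
      rw [← h1, Nat.card_congr φ, Nat.card_congr (Equiv.ofBijective col ⟨hinj, hsurj⟩),
        Nat.card_fin]
    exact Nat.Prime.not_prime_pow (x := p) (n := Module.finrank (ZMod p) V) (by omega)
      (hcard ▸ Nat.prime_five)
  subst hij
  exact ⟨rfl, main g fun x => add_right_cancel (hg x)⟩

/-- The subgroup is the `p`-torsion of the last nontrivial term of the derived series. -/
lemma exists_normal_elementary (G : Type) [Group G] [Finite G] [Nontrivial G] [Group.IsSolvable G] :
    ∃ (M : Subgroup G) (p : ℕ), M.Normal ∧ M ≠ ⊥ ∧ p.Prime ∧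
      (∀ x ∈ M, ∀ y ∈ M, x * y = y * x) ∧ ∀ x ∈ M, x ^ p = 1 := by
  classical
  have hex : ∃ n, derivedSeries G n = ⊥ := (Group.isSolvable_def G).1 inferInstance
  obtain ⟨n, hn⟩ : ∃ n, Nat.find hex = n + 1 := Nat.exists_eq_succ_of_ne_zero fun h => by
    have := Nat.find_spec hex
    rw [h, derivedSeries_zero] at this
    exact top_ne_bot this
  set A := derivedSeries G n with hA
  have hA0 : A ≠ ⊥ := Nat.find_min hex (by omega)
  have hAA : ⁅A, A⁆ = ⊥ := by
    have := Nat.find_spec hex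
    rwa [hn, derivedSeries_succ] at this
  have hcomm : ∀ x ∈ A, ∀ y ∈ A, x * y = y * x := fun x hx y hy =>
    (Subgroup.mem_centralizer_iff.1 (Subgroup.commutator_eq_bot_iff_le_centralizer.1 hAA hy)) x hx
  have hAn : A.Normal := derivedSeries_normal G n
  obtain ⟨p, hp, hpd⟩ := Nat.exists_prime_and_dvd (n := Nat.card A)
    (fun h => hA0 (Subgroup.card_eq_one.1 h))
  have := Fact.mk hp
  obtain ⟨a, ha⟩ := exists_prime_orderOf_dvd_card' p hpd
  let M : Subgroup G :=
    { carrier := {x | x ∈ A ∧ x ^ p = 1}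
      one_mem' := ⟨A.one_mem, one_pow p⟩
      mul_mem' := fun {x y} hx hy => ⟨A.mul_mem hx.1 hy.1, by
        rw [(show Commute x y from hcomm x hx.1 y hy.1).mul_pow, hx.2, hy.2, one_mul]⟩
      inv_mem' := fun {x} hx => ⟨A.inv_mem hx.1, by rw [inv_pow, hx.2, inv_one]⟩ }
  refine ⟨M, p, ⟨fun x hx g => ⟨hAn.conj_mem x hx.1 g, ?_⟩⟩, fun hM => ?_, hp,
    fun x hx y hy => hcomm x hx.1 y hy.1, fun x hx => hx.2⟩
  · rw [conj_pow, hx.2, mul_one, mul_inv_cancel]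
  · have haM : a.1 ∈ M := ⟨a.2, by rw [← Subgroup.coe_pow, ← ha, pow_orderOf_eq_one]; rfl⟩
    rw [hM, Subgroup.mem_bot] at haM
    rw [show a = 1 from Subtype.ext haM, orderOf_one] at ha
    exact hp.one_lt.ne ha

lemma good_of_solvable_perm (N : ℕ) : ∀ (Ω : Type) [Finite Ω] [Nonempty Ω], Nat.card Ω = N →
    ∀ (G : Subgroup (Equiv.Perm Ω)), Group.IsSolvable G → Good G Ω := by
  induction N using Nat.strong_induction_on with
  | _ N ih =>
  intro Ω _ _ hN G hG
  have ih' : ∀ (H Ω' : Type) [Group H] [MulAction H Ω'] [Finite Ω'] [Nonempty Ω'],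
      Group.IsSolvable H → Nat.card Ω' < Nat.card Ω → Good H Ω' := fun H Ω' _ _ _ _ hH hlt =>
    good_of_range (ih _ (hN ▸ hlt) Ω' rfl _
      (Group.isSolvable_of_surjective (MulAction.toPermHom H Ω').rangeRestrict_surjective))
  by_cases hr : ∃ r : Setoid Ω, (∀ (g : G) x y, r x y → r (g • x) (g • y)) ∧ r ≠ ⊥ ∧ r ≠ ⊤
  · obtain ⟨r, hinv, hbot, htop⟩ := hr
    let _ : MulAction G (Quotient r) :=
      { smul := fun g => Quotient.map (g • ·) fun x y h => hinv g x y h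
        one_smul := fun q => Quotient.inductionOn q fun x => congrArg _ (one_smul G x)
        mul_smul := fun g h q =>
          Quotient.inductionOn q fun x => congrArg (Quotient.mk r) (mul_smul g h x) }
    have hπ : ∀ (g : G) x, Quotient.mk r (g • x) = g • Quotient.mk r x := fun _ _ => rfl
    have : Nonempty (Quotient r) := ⟨Quotient.mk r (Classical.arbitrary Ω)⟩
    refine good_of_fibers (Quotient.mk r) hπ (ih' G (Quotient r) hG ?_) fun q => ?_
    · refine lt_of_le_of_ne (Nat.card_le_card_of_surjective _ Quotient.mk_surjective) fun h => ?_
      have hinj := ((Nat.bijective_iff_surjective_and_card (Quotient.mk r)).2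
        ⟨Quotient.mk_surjective, h.symm⟩).1
      refine hbot (le_bot_iff.1 fun x y hxy => hinj (Quotient.sound hxy))
    · let _ : MulAction (MulAction.stabilizer G q) {x : Ω // Quotient.mk r x = q} :=
        { smul := fun g x => ⟨g.1 • x.1, by rw [hπ, x.2]; exact g.2⟩
          one_smul := fun x => Subtype.ext (one_smul G x.1)
          mul_smul := fun g h x => Subtype.ext (mul_smul g.1 h.1 x.1) }
      have hne : Nonempty {x : Ω // Quotient.mk r x = q} :=
        let ⟨x, hx⟩ := Quotient.mk_surjective q; ⟨⟨x, hx⟩⟩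
      obtain ⟨y, hy⟩ : ∃ y, Quotient.mk r y ≠ q := by
        by_contra! hall
        exact htop (top_le_iff.1 fun x y _ => Quotient.exact ((hall x).trans (hall y).symm))
      obtain ⟨c, hc⟩ := ih' (MulAction.stabilizer G q) {x : Ω // Quotient.mk r x = q}
        inferInstance (Finite.card_subtype_lt hy)
      classical
      refine ⟨fun i x => if h : Quotient.mk r x = q then c i ⟨x, h⟩ else 0, fun i j g hgq hg => ?_⟩
      obtain ⟨hij, hfix⟩ := hc i j ⟨g, hgq⟩ fun x => by
        have := hg x.1 x.2
        dsimp only at this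
        rw [dif_pos x.2, dif_pos (by rw [hπ, x.2, hgq])] at this
        exact this
      exact ⟨hij, fun x hx => congrArg Subtype.val (hfix ⟨x, hx⟩)⟩
  · -- The only invariant equivalence relations are now the two trivial ones.
    push Not at hr
    rcases subsingleton_or_nontrivial G with hG1 | hG1
    · refine ⟨fun i _ => i, fun i j g hg => ⟨hg (Classical.arbitrary Ω), fun x => ?_⟩⟩
      rw [Subsingleton.elim g 1, one_smul]
    · obtain ⟨M, p, hM, hM0, hp, hcomm, hexp⟩ := exists_normal_elementary G
      have := Fact.mk hp
      have htop : MulAction.orbitRel M Ω = ⊤ := by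
        refine hr _ (fun g x y => ?_) fun hbot => hM0 ((Subgroup.eq_bot_iff_forall M).2 ?_)
        · rintro ⟨m, rfl⟩
          refine ⟨⟨g * m * g⁻¹, hM.conj_mem m m.2 g⟩, ?_⟩
          change (g * m.1 * g⁻¹) • g • y = g • m.1 • y
          simp only [mul_smul, inv_smul_smul]
        · intro m hm
          refine FaithfulSMul.eq_of_smul_eq_smul (α := Ω) fun x => ?_
          have : MulAction.orbitRel M Ω (m • x) x := ⟨⟨m, hm⟩, rfl⟩
          rw [hbot] at this
          rw [one_smul]; exact this
      let o := Classical.arbitrary Ω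
      refine good_of_affine M hcomm p hexp o fun x => ?_
      have : MulAction.orbitRel M Ω x o := by rw [htop]; trivial
      obtain ⟨m, hm⟩ := this
      exact ⟨m.1, m.2, hm⟩

/-- Seress' theorem: every solvable subgroup `G` of `Sym_n` admits an asymmetric partition
`P_1 ⊔ … ⊔ P_m` of `{1, …, n}` with `m ≤ 5` parts: only the identity of `G` fixes all parts
setwise. (A partition into at most `5` parts is encoded by a coloring `P : Fin n → Fin m`.) -/
theorem exists_asymmetric_partition {n : ℕ} (G : Subgroup (Equiv.Perm (Fin n)))
    (hG : IsSolvable G) :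
    ∃ m : ℕ, m ≤ 5 ∧ ∃ P : Fin n → Fin m,
      ∀ g ∈ G, (∀ x : Fin n, P (g x) = P x) → g = 1 := by
  refine ⟨5, le_rfl, ?_⟩
  rcases isEmpty_or_nonempty (Fin n) with hn | hn
  · exact ⟨fun _ => 0, fun g _ _ => Subsingleton.elim g 1⟩
  · obtain ⟨c, hc⟩ := good_of_solvable_perm _ (Fin n) rfl G hG
    exact ⟨c 0, fun g hgG hg => Equiv.ext (hc 0 0 ⟨g, hgG⟩ hg).2⟩

end Paper
end

section
/- Let G be a finite group and let E_1, E_2 be subgroups of G with [E_1,E_2] = {e}, E_1 E_2 normal in G, and C_G(E_1) ∩ C_G(E_2) = {e} (so the natural map G → G/C_G(E_1) × G/C_G(E_2) is injective). Let π_i : G → G/C_G(E_i) be the induced projections and let S ≤ G satisfy G = (E_1 E_2) S, with E_1 ≤ Ker(π_2) and E_2 ≤ Ker(π_1). If for each i ∈ {1,2} there exist elements x_{1,i},…,x_{k,i} ∈ E_i π_i ≤ Gπ_i with (Sπ_i)^{x_{1,i}} ∩ … ∩ (Sπ_i)^{x_{k,i}} = {e}, then, identifying E_i π_i with E_i and setting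 x_j = x_{j,1} x_{j,2} for j = 1,…,k, one has S^{x_1} ∩ … ∩ S^{x_k} = {e}. -/
/-! Since `x₂ j` lies in `E₂ ≤ ker π₁`, the projection `π₁` sends `x₁ j * x₂ j` to `π₁ (x₁ j)`, so it
maps the intersection of the conjugates `S^{x_j}` into the intersection of the conjugates
`(Sπ₁)^{π₁ (x₁ j)}`, which is trivial; symmetrically for `π₂`. Hence that intersection lies in
`ker π₁ ⊓ ker π₂ = C_G(E₁) ⊓ C_G(E₂) = ⊥`. -/

namespace Paper

/-- If `π` sends each `x j` to the same element as `z j`, then it sends every element of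
`⋂ S^{x_j}` into `⋂ (Sπ)^{z_jπ}`. -/
theorem map_mem_iInf_conjugate {G H ι : Type*} [Group G] [Group H] (π : G →* H)
    (S : Subgroup G) {x z : ι → G} (hxz : ∀ j, π (x j) = π (z j)) {g : G}
    (hg : g ∈ ⨅ j, conjugate S (x j)) : π g ∈ ⨅ j, conjugate (S.map π) (π (z j)) := by
  rw [Subgroup.mem_iInf] at hg ⊢
  intro j
  obtain ⟨t, ht, rfl⟩ := hg j
  exact ⟨π t, ⟨t, ht, rfl⟩, by simp [hxz]⟩

/-- If `[E₁, E₂] = 1`, `E₁E₂ ⊴ G`, `C_G(E₁) ∩ C_G(E₂) = 1`, `G = (E₁E₂)S` and, for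
`π_i : G → G/C_G(E_i)`, there are `x_{j,i} ∈ E_i` (`j = 1, …, k`) with
`(Sπ_i)^{π_i x_{1,i}} ∩ … ∩ (Sπ_i)^{π_i x_{k,i}} = 1` for `i = 1, 2`, then, with
`x_j = x_{j,1} x_{j,2}`, one has `S^{x_1} ∩ … ∩ S^{x_k} = 1`. -/
theorem trivial_intersection_of_projections {G : Type*} [Group G] [Finite G]
    (E₁ E₂ S : Subgroup G)
    (hcomm : ⁅E₁, E₂⁆ = ⊥)
    (hnorm : (E₁ ⊔ E₂).Normal)
    [h₁ : (Subgroup.centralizer (E₁ : Set G)).Normal]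
    [h₂ : (Subgroup.centralizer (E₂ : Set G)).Normal]
    (hcent : Subgroup.centralizer (E₁ : Set G) ⊓ Subgroup.centralizer (E₂ : Set G) = ⊥)
    (hker₁ : E₁ ≤ (QuotientGroup.mk' (Subgroup.centralizer (E₂ : Set G))).ker)
    (hker₂ : E₂ ≤ (QuotientGroup.mk' (Subgroup.centralizer (E₁ : Set G))).ker)
    (hfact : ∀ g : G, ∃ a ∈ E₁ ⊔ E₂, ∃ s ∈ S, g = a * s)
    {k : ℕ} (x₁ x₂ : Fin k → G) (hx₁ : ∀ j, x₁ j ∈ E₁) (hx₂ : ∀ j, x₂ j ∈ E₂)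
    (hint₁ : (⨅ j, conjugate (S.map (QuotientGroup.mk' (Subgroup.centralizer (E₁ : Set G))))
      (QuotientGroup.mk' (Subgroup.centralizer (E₁ : Set G)) (x₁ j))) = ⊥)
    (hint₂ : (⨅ j, conjugate (S.map (QuotientGroup.mk' (Subgroup.centralizer (E₂ : Set G))))
      (QuotientGroup.mk' (Subgroup.centralizer (E₂ : Set G)) (x₂ j))) = ⊥) :
    (⨅ j, conjugate S (x₁ j * x₂ j)) = ⊥ := by
  rw [eq_bot_iff, ← hcent]
  intro g hg
  have hx₁π : ∀ j, QuotientGroup.mk' (Subgroup.centralizer (E₁ : Set G)) (x₁ j * x₂ j) =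
      QuotientGroup.mk' (Subgroup.centralizer (E₁ : Set G)) (x₁ j) := fun j => by
    rw [map_mul, MonoidHom.mem_ker.1 (hker₂ (hx₂ j)), mul_one]
  have hx₂π : ∀ j, QuotientGroup.mk' (Subgroup.centralizer (E₂ : Set G)) (x₁ j * x₂ j) =
      QuotientGroup.mk' (Subgroup.centralizer (E₂ : Set G)) (x₂ j) := fun j => by
    rw [map_mul, MonoidHom.mem_ker.1 (hker₁ (hx₁ j)), one_mul]
  have hg₁ := map_mem_iInf_conjugate _ S hx₁π hg
  have hg₂ := map_mem_iInf_conjugate _ S hx₂π hg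
  rw [hint₁, Subgroup.mem_bot] at hg₁
  rw [hint₂, Subgroup.mem_bot] at hg₂
  exact ⟨(QuotientGroup.eq_one_iff g).1 hg₁, (QuotientGroup.eq_one_iff g).1 hg₂⟩

end Paper
end
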